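/- Let G be a graph with a circuit C and |E(C)| ≤ 35. If G admits a 4-flow (D, f) with E(G) − E(C) ⊆ supp(f), then G admits a 4-flow (D, g) with E(G) − E(C) ⊆ supp(g) and |E_{g=0}(C)| < |E(C)|/4. -/

import Mathlib

open Finset

/-- The number of endpoints of the (possibly looped) edge `s` equal to `v`
(a loop at `v` counts twice). -/
def edgeCount {V : Type} [DecidableEq V] (s : Sym2 V) (v : V) : ℕ :=
  Sym2.lift ⟨fun a b => (if a = v then 1 else 0) + (if b = v then 1 else 0),
    fun a b => by dsimp; omega⟩ s

/-- A `ℤ₂ × ℤ₂`-flow of a multigraph with edge-ends map `ends`: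
the values on edges incident with a vertex (loops counted twice) sum to `(0,0)`. -/
def IsFlow {V E : Type} [DecidableEq V] [Fintype E] (ends : E → Sym2 V)
    (f : E → ZMod 2 × ZMod 2) : Prop :=
  ∀ v : V, ∑ e : E, edgeCount (ends e) v • f e = 0

/-- An even subgraph (cycle): every vertex has even degree. -/
def IsEvenSub {V E : Type} [DecidableEq V] (ends : E → Sym2 V) (S : Finset E) : Prop :=
  ∀ v : V, Even (∑ e ∈ S, edgeCount (ends e) v)

/-- A circuit: a nonempty connected 2-regular subgraph, given by its edge set. -/
def IsCircuit {V E : Type} [DecidableEq V] (ends : E → Sym2 V) (CE : Finset E) : Prop :=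
  CE.Nonempty ∧
  (∀ v : V, (∑ e ∈ CE, edgeCount (ends e) v = 0) ∨ (∑ e ∈ CE, edgeCount (ends e) v = 2)) ∧
  ∀ e₁ ∈ CE, ∀ e₂ ∈ CE,
    Relation.ReflTransGen (fun a b => ∃ v : V, v ∈ ends a ∧ v ∈ ends b ∧ a ∈ CE ∧ b ∈ CE) e₁ e₂

/-!
Reducing modulo 2, a 4-flow yields a pair `(φ, β)` of `ZMod 2`-flows covering the edges off `C`, and
conversely such a pair lifts to a 4-flow whose zeros are common zeros of `φ` and `β`. Suppose that
every covering pair has at least `|C| / 4` common zeros on `C`. Adding `C` to `φ` or `β` permutes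
the four value classes on `C`, so each of them is exactly a quarter of `C`; hence `β` is balanced on
`C` for every covering pair.

The points of an Euler tour of `C` at which `φ` changes are joined in pairs by paths in the support
of `φ` off `C`. Each of these chords, closed up along `C`, is a flow that may be added to `β`, and
the balance of all such sums shows that every cell of the chord diagram meets both colours of `β`.
Contracting a minimal interval left by no chord, one finds by induction that the chord ends at which
`β` changes, but not at the other end of the chord, are fewer than the free jumps, that is, the
points at which `β` changes and `φ` does not. Add to `β` the flows of all chords at both ends of
which `β` changes, and then add the new `β` to `φ`: the free jumps of the resulting pair are among
those chord ends, so that their number drops, and this cannot go on forever.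
-/

lemma zmod_two_eq_zero_or_eq_one (a : ZMod 2) : a = 0 ∨ a = 1 := by
  revert a; decide

lemma zmod_two_eq_zero_of_ne_one {a : ZMod 2} (h : a ≠ 1) : a = 0 :=
  (zmod_two_eq_zero_or_eq_one a).resolve_right h

lemma natCast_card_filter_eq_one {ι : Type*} (s : Finset ι) (x : ι → ZMod 2) :
    (#{i ∈ s | x i = 1} : ZMod 2) = ∑ i ∈ s, x i := by
  rw [natCast_card_filter]
  refine sum_congr rfl fun i _ => ?_
  rcases zmod_two_eq_zero_or_eq_one (x i) with h | h <;> simp [h]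

lemma card_eq_card_filter_zmod_two_add {ι : Type*} (s : Finset ι) (x : ι → ZMod 2) :
    #s = #{i ∈ s | x i = 0} + #{i ∈ s | x i = 1} := by
  rw [← card_filter_add_card_filter_not (x · = 0)]
  congr 2
  refine filter_congr fun i _ => ?_
  rcases zmod_two_eq_zero_or_eq_one (x i) with h | h <;> simp [h]

section Balance

variable {ι κ : Type*} {A : Finset ι} {γ x : ι → ZMod 2}

/-- A `ZMod 2`-colouring `γ` is balanced on `A` when both colours occur equally often in `A`. -/
def IsBalanced (A : Finset ι) (γ : ι → ZMod 2) : Prop :=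
  #{e ∈ A | γ e = 0} = #{e ∈ A | γ e = 1}

lemma IsBalanced.exists_ne (h : IsBalanced A γ) {e : ι} (he : e ∈ A) : ∃ e' ∈ A, γ e ≠ γ e' := by
  by_contra! hconst
  have hclass (c : ZMod 2) : #{e' ∈ A | γ e' = c} = if γ e = c then #A else 0 := by
    rw [filter_congr fun e' he' => by rw [← hconst e' he'], filter_const, apply_ite card,
      card_empty]
  have hpos : #A ≠ 0 := card_ne_zero_of_mem he
  rw [IsBalanced, hclass, hclass] at h
  rcases zmod_two_eq_zero_or_eq_one (γ e) with h0 | h0 <;> simp_all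

lemma IsBalanced.filter (h : IsBalanced A γ) (hx : IsBalanced A (γ + x)) (c : ZMod 2) :
    IsBalanced {e ∈ A | x e = c} γ := by
  have hsplit (y : ι → ZMod 2) (d : ZMod 2) : #{e ∈ A | y e = d} =
      #{e ∈ A | y e = d ∧ x e = 0} + #{e ∈ A | y e = d ∧ x e = 1} := by
    rw [card_eq_card_filter_zmod_two_add _ x, filter_filter, filter_filter]
  have hshift (b d : ZMod 2) : #{e ∈ A | (γ + x) e = d ∧ x e = b} =
      #{e ∈ A | γ e = d + b ∧ x e = b} := by
    refine congrArg card (filter_congr fun e _ => and_congr_left fun h0 => ?_)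
    rw [Pi.add_apply, h0, ← sub_eq_iff_eq_add, ZModModule.sub_eq_add]
  rw [IsBalanced, hsplit, hsplit γ] at h
  rw [IsBalanced, hsplit, hsplit (γ + x)] at hx
  simp only [hshift, zero_add, add_zero, CharTwo.add_self_eq_zero] at hx
  rw [IsBalanced, filter_comm, filter_comm (x · = c), filter_filter, filter_filter]
  rcases zmod_two_eq_zero_or_eq_one c with rfl | rfl <;> omega

lemma exists_ne_of_forall_subset_isBalanced {T : Finset κ} {β : ι → ZMod 2}
    {x : κ → ι → ZMod 2} (h : ∀ S ⊆ T, IsBalanced A (β + ∑ i ∈ S, x i)) {e : ι} (he : e ∈ A) :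
    ∃ e' ∈ A, (∀ i ∈ T, x i e = x i e') ∧ β e ≠ β e' := by
  classical
  induction T using Finset.induction_on generalizing A with
  | empty => simpa using (h ∅ subset_rfl).exists_ne he
  | insert t T ht ih =>
    have hA (S) (hS : S ⊆ T) : IsBalanced {a ∈ A | x t a = x t e} (β + ∑ i ∈ S, x i) := by
      refine (h S (hS.trans (subset_insert t T))).filter ?_ _
      have := h (insert t S) (insert_subset_insert t hS)
      rwa [sum_insert fun htS => ht (hS htS), add_comm (x t), ← add_assoc] at this
    obtain ⟨e', he', hT, hne⟩ := ih hA (mem_filter.2 ⟨he, rfl⟩)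
    rw [mem_filter] at he'
    exact ⟨e', he'.1, forall_mem_insert _ _ _ |>.2 ⟨he'.2.symm, hT⟩, hne⟩

end Balance

section Pairing

variable {ι : Type*} {T : Finset ι} {m : ι → ι}

/-- `m` matches the elements of `T` in pairs: on `T` it is an involution without fixed points. -/
structure IsPairing (T : Finset ι) (m : ι → ι) : Prop where
  mem : ∀ i ∈ T, m i ∈ T
  ne : ∀ i ∈ T, m i ≠ i
  invol : ∀ i ∈ T, m (m i) = i

/-- The elements of `T` of value `1` whose partner under `m` has value `0`. -/
def mixedEnds (T : Finset ι) (m : ι → ι) (x : ι → ZMod 2) : Finset ι :=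
  {i ∈ T | x i = 1 ∧ x (m i) = 0}

lemma IsPairing.natCast_card_mixedEnds (h : IsPairing T m) (x : ι → ZMod 2) :
    (#(mixedEnds T m x) : ZMod 2) = ∑ i ∈ T, x i := by
  have hcancel : ∑ i ∈ T, x i * x (m i) = 0 := by
    refine sum_involution (fun i _ => m i) ?_ (fun i hi _ => h.ne i hi) h.mem h.invol
    intro i hi
    rw [h.invol i hi, mul_comm, CharTwo.add_self_eq_zero]
  rw [← add_zero (∑ i ∈ T, x i), ← hcancel, ← sum_add_distrib, mixedEnds, natCast_card_filter]
  refine sum_congr rfl fun i _ => ?_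
  generalize x i = a, x (m i) = b
  revert a b
  decide

lemma IsPairing.card_mixedEnds_lt (h : IsPairing T m) (hT : T.Nonempty) (x : ι → ZMod 2) :
    #(mixedEnds T m x) < #T := by
  refine card_lt_card ((filter_subset _ T).ssubset_of_ne fun heq => ?_)
  obtain ⟨i, hi⟩ := hT
  have hx {j : ι} (hj : j ∈ T) : x j = 1 ∧ x (m j) = 0 := (filter_eq_self.1 heq) j hj
  exact zero_ne_one ((hx hi).2.symm.trans (hx (h.mem i hi)).1)

lemma IsPairing.filter {P : ι → Prop} [DecidablePred P] (h : IsPairing T m)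
    (hP : ∀ i ∈ T, P i → P (m i)) : IsPairing {i ∈ T | P i} m where
  mem i hi := by
    rw [mem_filter] at hi ⊢
    exact ⟨h.mem i hi.1, hP i hi.1 hi.2⟩
  ne i hi := h.ne i (mem_filter.1 hi).1
  invol i hi := h.invol i (mem_filter.1 hi).1

end Pairing

section ChordDiagram

variable {L p q e e' i : ℕ} {T : Finset ℕ} {m : ℕ → ℕ} {β : ℕ → ZMod 2}

open fwdDiff

/-- The side of the chord joining the points `k` and `m k` on which the segment `e` lies. On the
line the segment `e` runs from the point `e - 1` to the point `e`; closing the line up to a circle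
identifies the segments `0` and `L`. -/
def chordSide (m : ℕ → ℕ) (k e : ℕ) : ZMod 2 :=
  (if k < e then 1 else 0) + (if m k < e then 1 else 0)

/-- Every segment `e` has the same side of all chords as some segment of the other colour. -/
def IsBichromatic (L : ℕ) (T : Finset ℕ) (m : ℕ → ℕ) (β : ℕ → ZMod 2) : Prop :=
  ∀ e < L, ∃ e' < L, (∀ i ∈ T, chordSide m i e = chordSide m i e') ∧ β e ≠ β e'

/-- The points of `A` off the chord ends `T` at which the colour `β` changes. -/
def freeJumps (A T : Finset ℕ) (β : ℕ → ZMod 2) : Finset ℕ :=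
  {i ∈ A | i ∉ T ∧ Δ_[1] β i = 1}

/-- No chord leaves the interval `[p, q)`. -/
def IsStable (T : Finset ℕ) (m : ℕ → ℕ) (p q : ℕ) : Prop :=
  ∀ i ∈ T, i ∈ Ico p q → m i ∈ Ico p q

lemma isStable_of_chordSide_eq (hside : ∀ i ∈ T, chordSide m i e = chordSide m i e') :
    IsStable T m (min e e') (max e e') := by
  intro i hi hmem
  have h := hside i hi
  simp only [mem_Ico, chordSide] at hmem h ⊢
  split_ifs at h <;> first | omega | simp at h

lemma IsStable.inter {p' q' : ℕ} (h : IsStable T m p q) (h' : IsStable T m p' q') :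
    IsStable T m (max p p') (min q q') := by
  intro i hi hmem
  have := h i hi
  have := h' i hi
  simp only [mem_Ico] at *
  omega

lemma IsStable.notMem (h : IsStable T m p q) (hpair : IsPairing T m) :
    ∀ i ∈ T, i ∉ Ico p q → m i ∉ Ico p q := fun i hi hmem hmi =>
  hmem (by simpa only [hpair.invol i hi] using h _ (hpair.mem i hi) hmi)

/-- `[p, q)` is minimal among the intervals that contain a chord end and are left by no chord. -/
structure IsMinimalBlock (T : Finset ℕ) (m : ℕ → ℕ) (p q : ℕ) : Prop where
  stable : IsStable T m p q
  left_mem : p ∈ T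
  right_mem : q - 1 ∈ T
  lt : p < q
  minimal : ∀ a b, p ≤ a → b ≤ q → IsStable T m a b → ∀ i ∈ T, i ∈ Ico a b → a = p ∧ b = q

lemma exists_isMinimalBlock (hpair : IsPairing T m) (hT : T.Nonempty) :
    ∃ p q, IsMinimalBlock T m p q := by
  obtain ⟨r, hr⟩ := T.exists_nat_subset_range
  obtain ⟨⟨p, q⟩, ⟨hstable, k, hkT, hk⟩, hmin⟩ := exists_minimalFor_of_wellFoundedLT
    (fun w : ℕ × ℕ => IsStable T m w.1 w.2 ∧ ∃ i ∈ T, i ∈ Ico w.1 w.2) (fun w => w.2 - w.1)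
    ⟨(0, r), fun i hi _ => by simpa using hr (hpair.mem i hi), hT.imp fun i hi =>
      ⟨hi, by simpa using hr hi⟩⟩
  have hminimal (a b : ℕ) (ha : p ≤ a) (hb : b ≤ q) (hab : IsStable T m a b) (i : ℕ) (hi : i ∈ T)
      (hmem : i ∈ Ico a b) : a = p ∧ b = q := by
    have := hmin (j := (a, b)) ⟨hab, i, hi, hmem⟩
    simp only [mem_Ico] at *
    omega
  have hshrink (a b : ℕ) (ha : p ≤ a) (hb : b ≤ q) (hsub : ∀ i ∈ T, i ∈ Ico p q → i ∈ Ico a b) :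
      a = p ∧ b = q :=
    hminimal a b ha hb (fun i hi hmem => hsub _ (hpair.mem i hi)
      (hstable i hi (Ico_subset_Ico ha hb hmem))) k hkT (hsub k hkT hk)
  have hlt : p < q := by rw [mem_Ico] at hk; omega
  refine ⟨p, q, hstable, ?_, ?_, hlt, hminimal⟩
  · by_contra hp
    have := hshrink (p + 1) q (by omega) le_rfl fun i hi hmem => by
      have := ne_of_mem_of_not_mem hi hp
      simp only [mem_Ico] at *
      omega
    omega
  · by_contra hq
    have := hshrink p (q - 1) le_rfl (by omega) fun i hi hmem => by
      have := ne_of_mem_of_not_mem hi hq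
      simp only [mem_Ico] at *
      omega
    omega

lemma IsMinimalBlock.mem_Ioo_of_chordSide_eq (hB : IsMinimalBlock T m p q) (he : e ∈ Ioo p q)
    (hside : ∀ i ∈ T, chordSide m i e = chordSide m i e') :
    e' ∈ Ioo p q ∧ ∀ i ∈ T, i ∉ Ico (min e e') (max e e') := by
  rw [mem_Ioo] at he ⊢
  have hno (i : ℕ) (hi : i ∈ T) (hmem : i ∈ Ico p q) : i ∉ Ico (min e e') (max e e') := by
    intro hmem'
    have := hB.minimal _ _ (le_max_left p _) (min_le_left q _)
      (hB.stable.inter (isStable_of_chordSide_eq hside)) i hi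
      (by simp only [mem_Ico] at *; omega)
    omega
  have hp := hno p hB.left_mem (left_mem_Ico.2 hB.lt)
  have hq := hno (q - 1) hB.right_mem (by rw [mem_Ico]; omega)
  rw [mem_Ico] at hp hq
  have he' : p < e' ∧ e' < q := by omega
  refine ⟨he', fun i hi hmem => hno i hi ?_ hmem⟩
  rw [mem_Ico] at hmem ⊢
  omega

lemma exists_fwdDiff_eq_one {a b : ℕ} (hab : a ≤ b) (hne : β a ≠ β b) :
    ∃ j ∈ Ico a b, Δ_[1] β j = 1 := by
  by_contra! hno
  refine hne (sub_eq_zero.1 ?_).symm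
  rw [← sum_Ico_sub β hab]
  exact sum_eq_zero fun j hj => zmod_two_eq_zero_of_ne_one (hno j hj)

-- After each chord end of the block but the last one, the two colours of a gap force a free jump.
lemma IsMinimalBlock.card_filter_le_card_freeJumps (hB : IsMinimalBlock T m p q)
    (hbi : IsBichromatic L T m β) (hq : q ≤ L) :
    #{i ∈ T | i ∈ Ico p q} ≤ #(freeJumps (Ico p q) T β) + 1 := by
  have hgap : ∀ i ∈ {i ∈ T | i ∈ Ico p q}.erase (q - 1),
      ∃ j ∈ freeJumps (Ico p q) T β, i < j ∧ ∀ k ∈ T, i < k → j < k := by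
    simp only [mem_erase, mem_filter, mem_Ico]
    intro i ⟨hiq, hiT, hi⟩
    obtain ⟨e, -, hside, hne⟩ := hbi (i + 1) (by omega)
    obtain ⟨he, hno⟩ := hB.mem_Ioo_of_chordSide_eq (by rw [mem_Ioo]; omega) hside
    have hie := hno i hiT
    simp only [mem_Ioo, mem_Ico] at he hie hno
    obtain ⟨j, hj, hjump⟩ := exists_fwdDiff_eq_one (by omega) hne
    rw [mem_Ico] at hj
    refine ⟨j, mem_filter.2 ⟨mem_Ico.2 (by omega), fun hjT => hno j hjT (by omega), hjump⟩,
      by omega, fun k hkT hik => ?_⟩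
    have := hno k hkT
    omega
  choose! j hj hij hjk using hgap
  rw [← card_erase_add_one (mem_filter.2 ⟨hB.right_mem, by have := hB.lt; rw [mem_Ico]; omega⟩),
    Nat.add_le_add_iff_right]
  refine card_le_card_of_injOn j hj fun i hi k hk hik => ?_
  by_contra hne
  have hmem {l} (hl : l ∈ {i ∈ T | i ∈ Ico p q}.erase (q - 1)) : l ∈ T :=
    (mem_filter.1 (mem_of_mem_erase hl)).1
  have := hij i hi
  have := hij k hk
  have := hjk i hi k (hmem hk)
  have := hjk k hk i (hmem hi)
  omega

/-- The colouring obtained from `β` by contracting the points of `[p, q)` to one: all segments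
between them take the colour of the segment before `p`. -/
def collapse (p q : ℕ) (β : ℕ → ZMod 2) (e : ℕ) : ZMod 2 :=
  if e ∈ Ioo p q then β p else β e

lemma collapse_of_notMem (he : e ∉ Ioo p q) : collapse p q β e = β e := if_neg he

lemma fwdDiff_collapse_of_notMem (hi : i ∉ Ico p q) : Δ_[1] (collapse p q β) i = Δ_[1] β i := by
  rw [mem_Ico] at hi
  rw [fwdDiff, collapse_of_notMem (by rw [mem_Ioo]; omega),
    collapse_of_notMem (by rw [mem_Ioo]; omega), fwdDiff]

lemma fwdDiff_collapse_of_mem (hi : i ∈ Ico p (q - 1)) : Δ_[1] (collapse p q β) i = 0 := by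
  have hconst (e : ℕ) (hpe : p ≤ e) (heq : e < q) : collapse p q β e = β p := by
    rcases hpe.eq_or_lt with rfl | hpe
    · exact collapse_of_notMem left_notMem_Ioo
    · exact if_pos (mem_Ioo.2 ⟨hpe, heq⟩)
  rw [mem_Ico] at hi
  rw [fwdDiff, hconst i hi.1 (by omega), hconst (i + 1) (by omega) (by omega), sub_self]

lemma fwdDiff_collapse_last (hpq : p < q) : Δ_[1] (collapse p q β) (q - 1) = β q - β p := by
  have hlast : collapse p q β (q - 1) = β p := by
    by_cases h : q - 1 ∈ Ioo p q
    · exact if_pos h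
    · rw [collapse_of_notMem h, show q - 1 = p by rw [mem_Ioo] at h; omega]
  rw [fwdDiff, hlast, Nat.sub_add_cancel (by omega), collapse_of_notMem right_notMem_Ioo]

lemma IsMinimalBlock.isBichromatic_collapse (hB : IsMinimalBlock T m p q) (hpair : IsPairing T m)
    (hbi : IsBichromatic L T m β) (hq : q ≤ L) :
    IsBichromatic L {i ∈ T | i ∉ Ico p q} m (collapse p q β) := by
  have houter (e e' : ℕ) (he : e ∉ Ioo p q)
      (hside : ∀ i ∈ T, chordSide m i e = chordSide m i e') : e' ∉ Ioo p q :=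
    fun he' => he (hB.mem_Ioo_of_chordSide_eq he' fun i hi => (hside i hi).symm).1
  intro e he
  by_cases hin : e ∈ Ioo p q
  · obtain ⟨e', he', hside, hne⟩ := hbi p (hB.lt.trans_le hq)
    refine ⟨e', he', fun i hi => ?_, ?_⟩
    · have hi' := mem_filter.1 hi
      rw [← hside i hi'.1]
      have hmi := hB.stable.notMem hpair i hi'.1 hi'.2
      have hpos (k : ℕ) (hk : k ∉ Ico p q) : k < e ↔ k < p := by
        rw [mem_Ico] at hk
        rw [mem_Ioo] at hin
        omega
      simp only [chordSide, hpos i hi'.2, hpos _ hmi]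
    · rwa [collapse_of_notMem (houter p e' left_notMem_Ioo hside), collapse, if_pos hin]
  · obtain ⟨e', he', hside, hne⟩ := hbi e he
    refine ⟨e', he', fun i hi => hside i (mem_filter.1 hi).1, ?_⟩
    rwa [collapse_of_notMem hin, collapse_of_notMem (houter e e' hin hside)]

lemma natCast_card_freeJumps (A : Finset ℕ) :
    (#(freeJumps A T β) : ZMod 2) = ∑ i ∈ A with i ∉ T, Δ_[1] β i := by
  rw [freeJumps, ← filter_filter, natCast_card_filter_eq_one]

lemma natCast_card_mixedEnds_add_card_freeJumps (hpq : p ≤ q)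
    (hpair : IsPairing {i ∈ T | i ∈ Ico p q} m) :
    ((#(mixedEnds {i ∈ T | i ∈ Ico p q} m (Δ_[1] β)) + #(freeJumps (Ico p q) T β) : ℕ) : ZMod 2) =
      β q - β p := by
  rw [Nat.cast_add, hpair.natCast_card_mixedEnds, natCast_card_freeJumps, ← sum_Ico_sub β hpq,
    ← sum_filter_add_sum_filter_not (Ico p q) (· ∈ T), filter_mem_eq_inter, filter_mem_eq_inter,
    inter_comm]
  rfl

lemma IsMinimalBlock.card_freeJumps_collapse_add_card_mixedEnds_le (hB : IsMinimalBlock T m p q)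
    (hpair : IsPairing T m) (hbi : IsBichromatic L T m β) (hq : q ≤ L) :
    #(freeJumps (Ico p q) {i ∈ T | i ∉ Ico p q} (collapse p q β)) +
      #(mixedEnds {i ∈ T | i ∈ Ico p q} m (Δ_[1] β)) ≤ #(freeJumps (Ico p q) T β) := by
  have hpairI := hpair.filter hB.stable
  have hmixed := hpairI.card_mixedEnds_lt
    ⟨p, mem_filter.2 ⟨hB.left_mem, left_mem_Ico.2 hB.lt⟩⟩ (Δ_[1] β)
  have hgaps := hB.card_filter_le_card_freeJumps hbi hq
  have hlast : ∀ i ∈ freeJumps (Ico p q) {i ∈ T | i ∉ Ico p q} (collapse p q β),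
      i = q - 1 ∧ β q - β p = 1 := by
    intro i hi
    obtain ⟨hmem, -, hjump⟩ := mem_filter.1 hi
    have hi : i = q - 1 := by
      by_contra hne
      rw [fwdDiff_collapse_of_mem (by rw [mem_Ico] at *; omega)] at hjump
      exact zero_ne_one hjump
    exact ⟨hi, by rwa [hi, fwdDiff_collapse_last hB.lt] at hjump⟩
  rcases eq_empty_or_nonempty (freeJumps (Ico p q) {i ∈ T | i ∉ Ico p q} (collapse p q β))
    with hempty | ⟨i, hi⟩
  · rw [hempty, card_empty]
    omega
  · have hone := card_le_one.2 fun i hi j hj => (hlast i hi).1.trans (hlast j hj).1.symm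
    have hodd := natCast_card_mixedEnds_add_card_freeJumps (β := β) hB.lt.le hpairI
    rw [(hlast i hi).2, ZMod.natCast_eq_one_iff_odd] at hodd
    obtain ⟨k, hk⟩ := hodd
    omega

lemma card_freeJumps_range_eq_add (hq : q ≤ L) :
    #(freeJumps (range L) T β) =
      #(freeJumps (range L \ Ico p q) T β) + #(freeJumps (Ico p q) T β) := by
  have hsub : Ico p q ⊆ range L := by
    rw [range_eq_Ico]
    exact Ico_subset_Ico p.zero_le hq
  rw [freeJumps, freeJumps, freeJumps, ← card_union_of_disjoint, ← filter_union,
    sdiff_union_of_subset hsub]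
  exact disjoint_filter_filter sdiff_disjoint

lemma card_mixedEnds_eq_add (hpair : IsPairing T m) (hst : IsStable T m p q) :
    #(mixedEnds T m (Δ_[1] β)) = #(mixedEnds {i ∈ T | i ∈ Ico p q} m (Δ_[1] β)) +
      #(mixedEnds {i ∈ T | i ∉ Ico p q} m (Δ_[1] (collapse p q β))) := by
  rw [mixedEnds, ← card_filter_add_card_filter_not (· ∈ Ico p q), filter_comm]
  congr 2
  rw [filter_comm]
  refine filter_congr fun i hi => ?_
  have hi := mem_filter.1 hi
  rw [fwdDiff_collapse_of_notMem hi.2, fwdDiff_collapse_of_notMem (hst.notMem hpair i hi.1 hi.2)]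

lemma IsMinimalBlock.card_mixedEnds_add_card_freeJumps_collapse_le (hB : IsMinimalBlock T m p q)
    (hpair : IsPairing T m) (hbi : IsBichromatic L T m β) (hq : q ≤ L) :
    #(mixedEnds T m (Δ_[1] β)) +
        #(freeJumps (range L) {i ∈ T | i ∉ Ico p q} (collapse p q β)) ≤
      #(mixedEnds {i ∈ T | i ∉ Ico p q} m (Δ_[1] (collapse p q β))) +
        #(freeJumps (range L) T β) := by
  have hinside := hB.card_freeJumps_collapse_add_card_mixedEnds_le hpair hbi hq
  have houtside : freeJumps (range L \ Ico p q) {i ∈ T | i ∉ Ico p q} (collapse p q β) =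
      freeJumps (range L \ Ico p q) T β := by
    refine filter_congr fun i hi => ?_
    have hi := (mem_sdiff.1 hi).2
    rw [fwdDiff_collapse_of_notMem hi, mem_filter]
    tauto
  rw [card_mixedEnds_eq_add hpair hB.stable, card_freeJumps_range_eq_add (p := p) hq,
    card_freeJumps_range_eq_add (p := p) hq, houtside]
  omega

theorem IsBichromatic.card_mixedEnds_add_two_le (hbi : IsBichromatic L T m β) (hL : 0 < L)
    (hclosed : β L = β 0) (hT : T ⊆ range L) (hpair : IsPairing T m) :
    #(mixedEnds T m (Δ_[1] β)) + 2 ≤ #(freeJumps (range L) T β) := by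
  induction T using Finset.strongInduction generalizing β with
  | H T ih =>
  rcases T.eq_empty_or_nonempty with rfl | hne
  · obtain ⟨e, he, -, hbe⟩ := hbi 0 hL
    obtain ⟨j, hj, hjump⟩ := exists_fwdDiff_eq_one e.zero_le hbe
    have hpos : 0 < #(freeJumps (range L) ∅ β) := card_pos.2 ⟨j, mem_filter.2
      ⟨mem_range.2 ((mem_Ico.1 hj).2.trans he), notMem_empty j, hjump⟩⟩
    have heven : Even #(freeJumps (range L) ∅ β) := by
      rw [← ZMod.natCast_eq_zero_iff_even, natCast_card_freeJumps,
        filter_true_of_mem fun i _ => notMem_empty i]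
      exact (sum_range_sub β L).trans (sub_eq_zero.2 hclosed)
    obtain ⟨k, hk⟩ := heven
    rw [mixedEnds, filter_empty, card_empty]
    omega
  · obtain ⟨p, q, hB⟩ := exists_isMinimalBlock hpair hne
    have hq : q ≤ L := by
      have := mem_range.1 (hT hB.right_mem)
      omega
    have hssub : {i ∈ T | i ∉ Ico p q} ⊂ T :=
      filter_ssubset.2 ⟨p, hB.left_mem, not_not.2 (left_mem_Ico.2 hB.lt)⟩
    have hclosed' : collapse p q β L = collapse p q β 0 := by
      rwa [collapse_of_notMem (by rw [mem_Ioo]; omega),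
        collapse_of_notMem (by rw [mem_Ioo]; omega)]
    have hih := ih _ hssub (hB.isBichromatic_collapse hpair hbi hq) hclosed'
      (hssub.subset.trans hT) (hpair.filter (hB.stable.notMem hpair))
    have := hB.card_mixedEnds_add_card_freeJumps_collapse_le hpair hbi hq
    omega

end ChordDiagram

section MonochromaticPairs

variable {T : Finset ℕ} {m : ℕ → ℕ}

open fwdDiff

/-- The smaller element of each pair of `m` on which `x` is constantly `1`. -/
def monoPairs (T : Finset ℕ) (m : ℕ → ℕ) (x : ℕ → ZMod 2) : Finset ℕ :=
  {k ∈ T | k < m k ∧ x k = 1 ∧ x (m k) = 1}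

lemma fwdDiff_chordSide (m : ℕ → ℕ) (k i : ℕ) :
    Δ_[1] (chordSide m k) i = (if k = i then 1 else 0) + (if m k = i then 1 else 0) := by
  have hstep (j : ℕ) : (if j < i + 1 then 1 else 0 : ZMod 2) =
      (if j < i then 1 else 0) + (if j = i then 1 else 0) := by
    rcases lt_trichotomy j i with h | rfl | h
    · simp [h, h.ne, h.trans i.lt_succ_self]
    · simp
    · simp [h.ne', h.not_gt, Nat.not_lt.2 (Nat.succ_le_of_lt h)]
  rw [fwdDiff, chordSide, chordSide, hstep, hstep]
  ring

lemma IsPairing.fwdDiff_sum_chordSide (h : IsPairing T m) (x : ℕ → ZMod 2) (i : ℕ) :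
    Δ_[1] (∑ k ∈ monoPairs T m x, chordSide m k) i = if i ∈ T then x i * x (m i) else 0 := by
  have hpartner : ∀ k ∈ monoPairs T m x, (m k = i ↔ i ∈ T ∧ k = m i) := by
    intro k hk
    have hkT := (mem_filter.1 hk).1
    refine ⟨?_, ?_⟩
    · rintro rfl
      exact ⟨h.mem k hkT, (h.invol k hkT).symm⟩
    · rintro ⟨hi, rfl⟩
      exact h.invol i hi
  simp only [fwdDiff_finsetSum, Finset.sum_apply, fwdDiff_chordSide, sum_add_distrib]
  rw [sum_congr rfl fun k hk => if_congr (hpartner k hk) rfl rfl]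
  by_cases hi : i ∈ T
  · simp only [hi, true_and, sum_ite_eq', monoPairs, mem_filter, h.mem i hi, h.invol i hi, if_true]
    rcases zmod_two_eq_zero_or_eq_one (x i) with h0 | h0 <;>
    rcases zmod_two_eq_zero_or_eq_one (x (m i)) with h1 | h1 <;>
    rcases (h.ne i hi).lt_or_gt with hlt | hlt <;> simp [h0, h1, hlt, hlt.not_gt]
  · simp [hi, monoPairs]

lemma IsPairing.mem_mixedEnds_of_fwdDiff_eq_one {β : ℕ → ZMod 2} (h : IsPairing T m) {i : ℕ}
    (hi : i ∈ T)
    (hjump : Δ_[1] (β + ∑ k ∈ monoPairs T m (Δ_[1] β), chordSide m k) i = 1) :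
    i ∈ mixedEnds T m (Δ_[1] β) := by
  rw [fwdDiff_add, Pi.add_apply, h.fwdDiff_sum_chordSide, if_pos hi] at hjump
  refine mem_filter.2 ⟨hi, ?_⟩
  generalize Δ_[1] β i = a, Δ_[1] β (m i) = b at hjump
  revert a b
  decide

end MonochromaticPairs

section Boundary

variable {V E R : Type*} [Fintype E] [CommRing R] {D : E → V × V}

/-- The boundary map of the digraph with arcs `(D e).1 → (D e).2`; its kernel is the module of
`R`-valued flows. -/
noncomputable def boundary (R : Type*) [CommRing R] (D : E → V × V) : (E → R) →ₗ[R] V →₀ R :=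
  Fintype.linearCombination R fun e => Finsupp.single (D e).1 1 - Finsupp.single (D e).2 1

lemma boundary_apply [DecidableEq V] (g : E → R) (v : V) :
    boundary R D g v = ∑ e with (D e).1 = v, g e - ∑ e with (D e).2 = v, g e := by
  simp only [boundary, Fintype.linearCombination_apply, Finsupp.finsetSum_apply,
    Finsupp.smul_apply, Finsupp.sub_apply, Finsupp.single_apply, smul_eq_mul, mul_sub,
    sum_sub_distrib, mul_ite, mul_one, mul_zero, sum_filter]

lemma boundary_eq_zero_iff [DecidableEq V] {g : E → R} :
    boundary R D g = 0 ↔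
      ∀ v, ∑ e with (D e).1 = v, g e = ∑ e with (D e).2 = v, g e := by
  simp only [Finsupp.ext_iff, boundary_apply, Finsupp.zero_apply, sub_eq_zero]

lemma boundary_intCast_eq_zero {g : E → ℤ} (hg : boundary ℤ D g = 0) :
    boundary R D (fun e => (g e : R)) = 0 := by
  classical
  rw [boundary_eq_zero_iff] at hg ⊢
  intro v
  simp only [← Int.cast_sum, hg v]

variable [DecidableEq E]

lemma boundary_single (e : E) (c : R) :
    boundary R D (Pi.single e c) = Finsupp.single (D e).1 c - Finsupp.single (D e).2 c := by
  rw [boundary, Fintype.linearCombination_apply_single, smul_sub, Finsupp.smul_single_one,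
    Finsupp.smul_single_one]

lemma exists_boundary_single_eq {x : E} {a b : V} (h : s((D x).1, (D x).2) = s(a, b)) :
    ∃ c : ℤˣ, boundary R D (Pi.single x ((c : ℤ) : R)) =
      Finsupp.single a 1 - Finsupp.single b 1 := by
  simp only [boundary_single]
  rcases Sym2.eq_iff.1 h with ⟨rfl, rfl⟩ | ⟨rfl, rfl⟩
  · exact ⟨1, by simp⟩
  · exact ⟨-1, by simp [neg_add_eq_sub]⟩

end Boundary

lemma boundary_indicator_eq_zero_iff_isEvenSub {V E : Type} [Fintype E] [DecidableEq V]
    {D : E → V × V} {S : Finset E} :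
    boundary (ZMod 2) D ((S : Set E).indicator 1) = 0 ↔
      IsEvenSub (fun e => s((D e).1, (D e).2)) S := by
  classical
  simp only [IsEvenSub, Finsupp.ext_iff, Finsupp.zero_apply, ← ZMod.natCast_eq_zero_iff_even]
  refine forall_congr' fun v => ?_
  rw [boundary_apply, ZModModule.sub_eq_add]
  simp only [Set.indicator_apply, mem_coe, Pi.one_apply, sum_filter, ← sum_add_distrib, edgeCount,
    Sym2.lift_mk, Nat.cast_sum, Nat.cast_add, Nat.cast_ite, Nat.cast_one, Nat.cast_zero]
  rw [← Fintype.sum_ite_mem S]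
  refine Eq.congr_left (sum_congr rfl fun e _ => ?_)
  split_ifs <;> simp

section Trail

variable {V E R : Type*} [CommRing R] {D : E → V × V} {S : Finset E} {n p q : ℕ}
  {v : ℕ → V} {e : ℕ → E}

lemma exists_boundary_sum_single_eq [Fintype E] [DecidableEq E] (hpq : p ≤ q)
    (hends : ∀ i ∈ Ico p q, s((D (e i)).1, (D (e i)).2) = s(v i, v (i + 1))) :
    ∃ c : ℕ → ℤˣ, boundary R D (∑ i ∈ Ico p q, Pi.single (e i) ((c i : ℤ) : R)) =
      Finsupp.single (v p) 1 - Finsupp.single (v q) 1 := by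
  choose! c hc using fun i hi => exists_boundary_single_eq (R := R) (hends i hi)
  refine ⟨c, ?_⟩
  rw [map_sum, sum_congr rfl hc, ← neg_inj, ← sum_neg_distrib, neg_sub,
    ← sum_Ico_sub (fun i => Finsupp.single (v i) (1 : R)) hpq]
  simp only [neg_sub]

lemma intCast_units_zmod_two (c : ℤˣ) : ((c : ℤ) : ZMod 2) = 1 := by
  rcases Int.units_eq_one_or c with rfl | rfl <;> rfl

lemma boundary_sum_single_one [Fintype E] [DecidableEq E] (hpq : p ≤ q)
    (hends : ∀ i ∈ Ico p q, s((D (e i)).1, (D (e i)).2) = s(v i, v (i + 1))) :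
    boundary (ZMod 2) D (∑ i ∈ Ico p q, Pi.single (e i) 1) =
      Finsupp.single (v p) 1 + Finsupp.single (v q) 1 := by
  obtain ⟨c, hc⟩ := exists_boundary_sum_single_eq (R := ZMod 2) hpq hends
  simpa only [intCast_units_zmod_two, ZModModule.sub_eq_add] using hc

lemma sum_single_apply_of_injOn [DecidableEq E] (hinj : Set.InjOn e (Set.Iio n)) (c : ℕ → R)
    {A : Finset ℕ} (hA : A ⊆ range n) {i : ℕ} (hi : i < n) :
    (∑ j ∈ A, Pi.single (e j) (c j) : E → R) (e i) = if i ∈ A then c i else 0 := by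
  rw [Finset.sum_apply, ← sum_ite_eq A i c]
  refine sum_congr rfl fun j hj => ?_
  have hiff : e i = e j ↔ i = j := hinj.eq_iff hi (mem_range.1 (hA hj))
  rw [Pi.single_apply, if_congr hiff rfl rfl]

lemma sum_single_apply_of_notMem [DecidableEq E] {A : Finset ℕ} {c : ℕ → R} {x : E}
    (hx : ∀ j ∈ A, e j ≠ x) : (∑ j ∈ A, Pi.single (e j) (c j) : E → R) x = 0 := by
  rw [Finset.sum_apply]
  exact sum_eq_zero fun j hj => Pi.single_eq_of_ne (hx j hj).symm _

/-- A trail of length `n` in the edge set `S`, in which arcs of `D` may be traversed in either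
direction: `e i` joins `v i` to `v (i + 1)`, and the edges `e 0, …, e (n - 1)` are distinct. The
values of `v` and `e` beyond the trail are irrelevant. -/
structure IsTrail (D : E → V × V) (S : Finset E) (n : ℕ) (v : ℕ → V) (e : ℕ → E) : Prop where
  mem : ∀ i < n, e i ∈ S
  injOn : Set.InjOn e (Set.Iio n)
  ends : ∀ i < n, s((D (e i)).1, (D (e i)).2) = s(v i, v (i + 1))

lemma IsTrail.length_le (h : IsTrail D S n v e) : n ≤ #S := by
  rw [← card_range n]
  exact card_le_card_of_injOn e (fun i hi => h.mem i (mem_range.1 hi)) (by simpa using h.injOn)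

lemma IsTrail.snoc (h : IsTrail D S n v e) {x : E} (hx : x ∈ S) (hnew : ∀ i < n, e i ≠ x)
    {w : V} (hends : s((D x).1, (D x).2) = s(v n, w)) :
    IsTrail D S (n + 1) (Function.update v (n + 1) w) (Function.update e n x) := by
  have hold {i : ℕ} (hi : i < n) : Function.update e n x i = e i :=
    Function.update_of_ne hi.ne x e
  refine ⟨fun i hi => ?_, fun i hi j hj hij => ?_, fun i hi => ?_⟩
  · rcases (Nat.lt_succ_iff_lt_or_eq.1 hi) with hi | rfl
    · rw [hold hi]
      exact h.mem i hi
    · rwa [Function.update_self]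
  · rcases (Nat.lt_succ_iff_lt_or_eq.1 hi) with hi | rfl <;>
    rcases (Nat.lt_succ_iff_lt_or_eq.1 hj) with hj | rfl
    · rw [hold hi, hold hj] at hij
      exact h.injOn hi hj hij
    · rw [hold hi, Function.update_self] at hij
      exact absurd hij (hnew i hi)
    · rw [hold hj, Function.update_self] at hij
      exact absurd hij.symm (hnew j hj)
    · rfl
  · rw [Function.update_of_ne (by omega : i ≠ n + 1)]
    rcases (Nat.lt_succ_iff_lt_or_eq.1 hi) with hi | rfl
    · rw [hold hi, Function.update_of_ne (by omega), h.ends i hi]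
    · rw [Function.update_self, Function.update_self, hends]

lemma IsTrail.rotate (h : IsTrail D S n v e) (hclosed : v n = v 0) (k : ℕ) :
    IsTrail D S n (fun i => v ((i + k) % n)) (fun i => e ((i + k) % n)) := by
  refine ⟨fun i hi => h.mem _ (Nat.mod_lt _ (by omega)), fun i hi j hj hij => ?_, fun i hi => ?_⟩
  · rw [Set.mem_Iio] at hi hj
    have := h.injOn (Nat.mod_lt _ (by omega)) (Nat.mod_lt _ (by omega)) hij
    exact (Nat.ModEq.add_right_cancel' k this).eq_of_lt_of_lt hi hj
  · have hlt := Nat.mod_lt (i + k) (by omega : n > 0)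
    rw [h.ends _ hlt, Nat.add_right_comm, Nat.add_mod (i + k) 1 n]
    rcases (Nat.succ_le_of_lt hlt).eq_or_lt with hlast | hlt'
    · have : ((i + k) % n + 1 % n) % n = 0 := by
        rw [Nat.add_mod_mod, show (i + k) % n + 1 = n from hlast, Nat.mod_self]
      rw [this, ← hclosed, show (i + k) % n + 1 = n from hlast]
    · rw [Nat.add_mod_mod, Nat.mod_eq_of_lt hlt']

/-- A trail in `S` that is at least as long as every other trail in `S`. -/
structure IsLongestTrail (D : E → V × V) (S : Finset E) (n : ℕ) (v : ℕ → V) (e : ℕ → E) : Prop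
    extends IsTrail D S n v e where
  le : ∀ {n' v' e'}, IsTrail D S n' v' e' → n' ≤ n

lemma exists_isLongestTrail (hS : S.Nonempty) : ∃ n v e, 0 < n ∧ IsLongestTrail D S n v e := by
  obtain ⟨x, hx⟩ := hS
  let lengths : Set ℕ := {n | ∃ v e, IsTrail D S n v e}
  have hone : 1 ∈ lengths := ⟨fun i => if i = 0 then (D x).1 else (D x).2, fun _ => x,
    fun _ _ => hx, fun i hi j hj _ => by rw [Set.mem_Iio] at hi hj; omega,
    fun i hi => by simp [Nat.lt_one_iff.1 hi]⟩
  have hbdd : BddAbove lengths := ⟨#S, fun n ⟨_, _, h⟩ => h.length_le⟩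
  obtain ⟨v, e, h⟩ := Nat.sSup_mem ⟨1, hone⟩ hbdd
  exact ⟨_, v, e, le_csSup hbdd hone, h, fun h' => le_csSup hbdd ⟨_, _, h'⟩⟩

lemma IsLongestTrail.mem_edges_of_mem_ends (h : IsLongestTrail D S n v e) {x : E} (hx : x ∈ S)
    (hvx : v n ∈ s((D x).1, (D x).2)) : ∃ i < n, e i = x := by
  by_contra! hnew
  obtain ⟨w, hw⟩ := hvx
  have := h.le (h.snoc hx hnew hw)
  omega

lemma IsLongestTrail.closed [Fintype E] (h : IsLongestTrail D S n v e)
    (hS : boundary (ZMod 2) D ((S : Set E).indicator 1) = 0) : v n = v 0 := by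
  classical
  by_contra hne
  have hunused : ∀ x, ((S : Set E).indicator 1 + ∑ i ∈ Ico 0 n, Pi.single (e i) 1 : E → ZMod 2) x
      = 0 ∨ v n ∉ s((D x).1, (D x).2) := by
    intro x
    by_cases hx : ∃ i < n, e i = x
    · obtain ⟨i, hi, rfl⟩ := hx
      left
      rw [Pi.add_apply, sum_single_apply_of_injOn h.injOn _ (by rw [range_eq_Ico]) hi,
        Set.indicator_of_mem (mem_coe.2 (h.mem i hi)), if_pos (mem_Ico.2 ⟨i.zero_le, hi⟩)]
      exact CharTwo.add_self_eq_zero 1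
    · by_cases hxS : x ∈ S
      · exact Or.inr fun hv => hx (h.mem_edges_of_mem_ends hxS hv)
      · push Not at hx
        left
        rw [Pi.add_apply, sum_single_apply_of_notMem fun j hj => hx j (mem_Ico.1 hj).2,
          Set.indicator_of_notMem (mt mem_coe.1 hxS), add_zero]
  have hzero : boundary (ZMod 2) D
      ((S : Set E).indicator 1 + ∑ i ∈ Ico 0 n, Pi.single (e i) 1) (v n) = 0 := by
    rw [boundary_apply, sum_eq_zero, sum_eq_zero, sub_zero]
    · intro x hx
      refine (hunused x).resolve_right (not_not.2 ?_)
      rw [← (mem_filter.1 hx).2]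
      exact Sym2.mem_mk_right _ _
    · intro x hx
      refine (hunused x).resolve_right (not_not.2 ?_)
      rw [← (mem_filter.1 hx).2]
      exact Sym2.mem_mk_left _ _
  rw [map_add, hS, zero_add,
    boundary_sum_single_one n.zero_le fun i hi => h.ends i (mem_Ico.1 hi).2] at hzero
  simp [Ne.symm hne] at hzero

/-- A closed trail through all edges of `S`, with vertices and edges enumerated cyclically. -/
structure IsEulerTour (D : E → V × V) (S : Finset E) (n : ℕ) (v : ℕ → V) (e : ℕ → E) : Prop
    extends IsTrail D S n v e where
  pos : 0 < n
  closed : v n = v 0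
  closed_edge : e n = e 0
  surj : ∀ x ∈ S, ∃ i < n, e i = x

theorem exists_isEulerTour [Fintype E] (hS : S.Nonempty)
    (heven : boundary (ZMod 2) D ((S : Set E).indicator 1) = 0)
    (hconn : ∀ a ∈ S, ∀ b ∈ S, Relation.ReflTransGen (fun a b => ∃ w : V,
      w ∈ s((D a).1, (D a).2) ∧ w ∈ s((D b).1, (D b).2) ∧ a ∈ S ∧ b ∈ S) a b) :
    ∃ n v e, IsEulerTour D S n v e := by
  obtain ⟨n, v, e, hn, h⟩ := exists_isLongestTrail (D := D) hS
  have hclosed := h.closed heven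
  have hstep (k : ℕ) (hk : k ≤ n) (x : E) (hx : x ∈ S) (hvx : v k ∈ s((D x).1, (D x).2)) :
      ∃ i < n, e i = x := by
    have hvk : v ((n + k) % n) = v k := by
      rw [Nat.add_mod_left]
      rcases hk.eq_or_lt with rfl | hk
      · rw [Nat.mod_self, hclosed]
      · rw [Nat.mod_eq_of_lt hk]
    obtain ⟨i, -, hi⟩ := IsLongestTrail.mem_edges_of_mem_ends
      ⟨h.rotate hclosed k, h.le⟩ hx (by rwa [hvk])
    exact ⟨_, Nat.mod_lt _ hn, hi⟩
  have hsurj (x : E) (hx : x ∈ S) : ∃ i < n, e i = x := by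
    induction hconn (e 0) (h.mem 0 hn) x hx with
    | refl => exact ⟨0, hn, rfl⟩
    | tail _ hadj ih =>
      obtain ⟨w, hwa, hwb, haS, hbS⟩ := hadj
      obtain ⟨i, hi, rfl⟩ := ih haS
      rw [h.ends i hi, Sym2.mem_iff] at hwa
      rcases hwa with rfl | rfl
      · exact hstep i hi.le _ hbS hwb
      · exact hstep (i + 1) hi _ hbS hwb
  refine ⟨n, _, _, h.rotate hclosed 0, hn, ?_, ?_, fun x hx => ?_⟩
  · simp
  · simp
  · obtain ⟨i, hi, rfl⟩ := hsurj x hx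
    exact ⟨i, hi, by simp [Nat.mod_eq_of_lt hi]⟩

lemma IsEulerTour.isBalanced_comp {γ : E → ZMod 2} (h : IsEulerTour D S n v e)
    (hγ : IsBalanced S γ) :
    IsBalanced (range n) (γ ∘ e) := by
  have hcard (b : ZMod 2) : #{i ∈ range n | (γ ∘ e) i = b} = #{x ∈ S | γ x = b} := by
    refine card_bij (fun i _ => e i) (fun i hi => ?_) (fun i hi j hj hij => ?_) fun x hx => ?_
    · rw [mem_filter, mem_range] at hi
      exact mem_filter.2 ⟨h.mem i hi.1, hi.2⟩
    · rw [mem_filter, mem_range] at hi hj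
      exact h.injOn hi.1 hj.1 hij
    · obtain ⟨hxS, hxb⟩ := mem_filter.1 hx
      obtain ⟨i, hi, rfl⟩ := h.surj x hxS
      exact ⟨i, mem_filter.2 ⟨mem_range.2 hi, hxb⟩, rfl⟩
  rw [IsBalanced, hcard, hcard, hγ]

end Trail

section Lift

variable {V E : Type*} [Fintype E] {D : E → V × V} {S : Finset E}

lemma exists_subset_intFlow (hS : S.Nonempty)
    (heven : boundary (ZMod 2) D ((S : Set E).indicator 1) = 0) :
    ∃ A ⊆ S, A.Nonempty ∧ ∃ g : E → ℤ, boundary ℤ D g = 0 ∧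
      (∀ x ∈ A, |g x| = 1) ∧ ∀ x ∉ A, g x = 0 := by
  classical
  obtain ⟨n, v, e, hn, h⟩ := exists_isLongestTrail (D := D) hS
  obtain ⟨c, hc⟩ := exists_boundary_sum_single_eq (R := ℤ) n.zero_le fun i hi =>
    h.ends i (mem_Ico.1 hi).2
  rw [h.closed heven, sub_self] at hc
  refine ⟨(range n).image e, image_subset_iff.2 fun i hi => h.mem i (mem_range.1 hi),
    ⟨e 0, mem_image_of_mem e (mem_range.2 hn)⟩, _, hc, fun x hx => ?_, fun x hx => ?_⟩
  · obtain ⟨i, hi, rfl⟩ := mem_image.1 hx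
    rw [sum_single_apply_of_injOn h.injOn _ (by rw [range_eq_Ico]) (mem_range.1 hi),
      if_pos (by rwa [← range_eq_Ico])]
    exact Int.isUnit_iff_abs_eq.1 (c i).isUnit
  · refine sum_single_apply_of_notMem fun j hj hjx => hx ?_
    rw [← range_eq_Ico] at hj
    exact mem_image.2 ⟨j, hj, hjx⟩

lemma exists_intFlow_lift_indicator (heven : boundary (ZMod 2) D ((S : Set E).indicator 1) = 0) :
    ∃ h : E → ℤ, boundary ℤ D h = 0 ∧
      ∀ x, |h x| ≤ 1 ∧ (h x : ZMod 2) = (S : Set E).indicator 1 x := by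
  classical
  induction S using Finset.strongInduction with
  | H S ih =>
  rcases S.eq_empty_or_nonempty with rfl | hne
  · exact ⟨0, map_zero _, by simp⟩
  obtain ⟨A, hAS, hA, g, hg, hgA, hg0⟩ := exists_subset_intFlow hne heven
  have hgcast (x : E) : (g x : ZMod 2) = (A : Set E).indicator 1 x := by
    by_cases hx : x ∈ A
    · rw [Set.indicator_of_mem (mem_coe.2 hx)]
      rcases eq_or_eq_neg_of_abs_eq (hgA x hx) with h | h <;> rw [h] <;> rfl
    · rw [Set.indicator_of_notMem (mt mem_coe.1 hx), hg0 x hx, Int.cast_zero]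
  have hsplit : ((S \ A : Finset E) : Set E).indicator (1 : E → ZMod 2) =
      (S : Set E).indicator 1 - fun x => (g x : ZMod 2) := by
    simp only [hgcast, coe_sdiff]
    exact Set.indicator_sdiff hAS 1
  obtain ⟨h, hh, hlift⟩ := ih (S \ A) (sdiff_ssubset hAS hA)
    (by rw [hsplit, map_sub, heven, boundary_intCast_eq_zero hg, sub_zero])
  refine ⟨h + g, by rw [map_add, hh, hg, add_zero], fun x => ⟨?_, ?_⟩⟩
  · by_cases hx : x ∈ A
    · have hhx : h x = 0 := by
        have hmod := (hlift x).2
        rw [Set.indicator_of_notMem (by simp [hx]), ZMod.intCast_eq_zero_iff_even] at hmod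
        have habs := (hlift x).1
        grind
      rw [Pi.add_apply, hhx, zero_add, hgA x hx]
    · rw [Pi.add_apply, hg0 x hx, add_zero]
      exact (hlift x).1
  · rw [Pi.add_apply, Int.cast_add, (hlift x).2, hsplit, Pi.sub_apply, sub_add_cancel]

theorem exists_intFlow_lift {φ : E → ZMod 2} (hφ : boundary (ZMod 2) D φ = 0) :
    ∃ h : E → ℤ, boundary ℤ D h = 0 ∧ ∀ x, |h x| ≤ 1 ∧ (h x : ZMod 2) = φ x := by
  have hind : (({x | φ x = 1} : Finset E) : Set E).indicator 1 = φ := by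
    ext x
    rcases zmod_two_eq_zero_or_eq_one (φ x) with h | h <;> simp [h]
  have hlift := exists_intFlow_lift_indicator (D := D) (S := {x | φ x = 1}) (by rwa [hind])
  rwa [hind] at hlift

end Lift

section Linked

variable {V E ι : Type*} [Fintype E] {D : E → V × V} {Q : Set E} {T : Finset ι} {v : ι → V}
  {a b c : V}

/-- `a` and `b` lie in the same component of the graph with edge set `Q`, expressed by a
`ZMod 2`-chain supported in `Q` with boundary `a + b`. -/
def Linked (D : E → V × V) (Q : Set E) (a b : V) : Prop :=
  ∃ z : E → ZMod 2, (∀ x ∉ Q, z x = 0) ∧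
    boundary (ZMod 2) D z = Finsupp.single a 1 + Finsupp.single b 1

lemma Linked.refl (D : E → V × V) (Q : Set E) (a : V) : Linked D Q a a :=
  ⟨0, fun _ _ => rfl, by rw [map_zero, ZModModule.add_self]⟩

lemma Linked.symm (h : Linked D Q a b) : Linked D Q b a := by
  rwa [Linked, add_comm]

lemma Linked.trans (h : Linked D Q a b) (h' : Linked D Q b c) : Linked D Q a c := by
  obtain ⟨z, hz, hab⟩ := h
  obtain ⟨z', hz', hbc⟩ := h'
  refine ⟨z + z', fun x hx => by rw [Pi.add_apply, hz x hx, hz' x hx, add_zero], ?_⟩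
  rw [map_add, hab, hbc, add_assoc, ← add_assoc (Finsupp.single b 1), ZModModule.add_self, zero_add]

lemma linked_ends {x : E} (hx : x ∈ Q) : Linked D Q (D x).1 (D x).2 := by
  classical
  refine ⟨Pi.single x 1, fun y hy => Pi.single_eq_of_ne (ne_of_mem_of_not_mem hx hy).symm 1, ?_⟩
  rw [boundary_single, ZModModule.sub_eq_add]

-- A boundary supported in `Q` meets every component of `Q` in an even number of vertices.
lemma exists_ne_linked {z : E → ZMod 2} (hz : ∀ x ∉ Q, z x = 0)
    (hboundary : boundary (ZMod 2) D z = ∑ i ∈ T, Finsupp.single (v i) 1) {u : ι} (hu : u ∈ T) :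
    ∃ j ∈ T, j ≠ u ∧ Linked D Q (v u) (v j) := by
  classical
  by_contra! hno
  let component : V → ZMod 2 := Set.indicator {a | Linked D Q (v u) a} 1
  have hends (x : E) (hx : x ∈ Q) : component (D x).1 = component (D x).2 :=
    Set.indicator_eq_indicator
      ⟨fun h => h.trans (linked_ends hx), fun h => h.trans (linked_ends hx).symm⟩ rfl
  have hzero : Finsupp.linearCombination (ZMod 2) component (boundary (ZMod 2) D z) = 0 := by
    rw [boundary, Fintype.linearCombination_apply, map_sum]
    refine sum_eq_zero fun x _ => ?_
    by_cases hx : x ∈ Q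
    · simp [hends x hx]
    · simp [hz x hx]
  have hone : ∑ i ∈ T, component (v i) = 1 := by
    rw [sum_eq_single_of_mem u hu fun j hj hju =>
      Set.indicator_of_notMem (s := {a | Linked D Q (v u) a}) (hno j hj hju) 1]
    exact Set.indicator_of_mem (s := {a | Linked D Q (v u) a}) (Linked.refl D Q _) 1
  simp [hboundary, hone] at hzero

lemma IsPairing.of_erase_erase [DecidableEq ι] {m : ι → ι} {u j : ι}
    (h : IsPairing ((T.erase u).erase j) m) (hu : u ∈ T) (hj : j ∈ T) (hju : j ≠ u) :
    IsPairing T fun i => if i = u then j else if i = j then u else m i := by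
  have hrest {i : ι} (hi : i ∈ T) (hiu : i ≠ u) (hij : i ≠ j) : i ∈ (T.erase u).erase j :=
    mem_erase.2 ⟨hij, mem_erase.2 ⟨hiu, hi⟩⟩
  refine ⟨fun i hi => ?_, fun i hi => ?_, fun i hi => ?_⟩
  all_goals
    by_cases hiu : i = u
    · grind
    by_cases hij : i = j
    · grind
    have := h.mem i (hrest hi hiu hij)
    have := h.ne i (hrest hi hiu hij)
    have := h.invol i (hrest hi hiu hij)
    grind

lemma exists_isPairing_linked {z : E → ZMod 2} (hz : ∀ x ∉ Q, z x = 0)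
    (hboundary : boundary (ZMod 2) D z = ∑ i ∈ T, Finsupp.single (v i) 1) :
    ∃ m : ι → ι, IsPairing T m ∧ ∀ i ∈ T, Linked D Q (v i) (v (m i)) := by
  classical
  induction T using Finset.strongInduction generalizing z with
  | H T ih =>
  rcases T.eq_empty_or_nonempty with rfl | ⟨u, hu⟩
  · exact ⟨id, ⟨by simp, by simp, by simp⟩, by simp⟩
  obtain ⟨j, hj, hju, hlink⟩ := exists_ne_linked hz hboundary hu
  obtain ⟨w, hw, hwb⟩ := id hlink
  have hrest : boundary (ZMod 2) D (w + z) =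
      ∑ i ∈ (T.erase u).erase j, Finsupp.single (v i) 1 := by
    rw [map_add, hboundary, hwb, ← add_sum_erase T _ hu,
      ← add_sum_erase (T.erase u) _ (mem_erase.2 ⟨hju, hj⟩), ← add_assoc (Finsupp.single (v u) 1),
      ← add_assoc, ZModModule.add_self, zero_add]
  obtain ⟨m, hm, hpath⟩ := ih _ (((T.erase u).erase_subset j).trans_ssubset (erase_ssubset hu))
    (z := w + z) (fun x hx => by rw [Pi.add_apply, hw x hx, hz x hx, add_zero]) hrest
  refine ⟨_, hm.of_erase_erase hu hj hju, fun i hi => ?_⟩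
  split_ifs with hiu hij
  · rwa [hiu]
  · rw [hij]
    exact hlink.symm
  · exact hpath i (mem_erase.2 ⟨hij, mem_erase.2 ⟨hiu, hi⟩⟩)

end Linked

section CoveringPair

variable {V E : Type*} [Fintype E] {D : E → V × V} {C : Finset E} {φ β : E → ZMod 2}
  {L : ℕ} {v : ℕ → V} {e : ℕ → E}

open fwdDiff

/-- `(φ, β)` is a `ZMod 2 × ZMod 2`-flow whose zeros all lie in `C`. -/
structure IsCoveringPair (D : E → V × V) (C : Finset E) (φ β : E → ZMod 2) : Prop where
  boundary_left : boundary (ZMod 2) D φ = 0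
  boundary_right : boundary (ZMod 2) D β = 0
  cover : ∀ x ∉ C, φ x = 1 ∨ β x = 1

lemma IsCoveringPair.add_smul_indicator (h : IsCoveringPair D C φ β)
    (hC : boundary (ZMod 2) D ((C : Set E).indicator 1) = 0) (a b : ZMod 2) :
    IsCoveringPair D C (φ + a • (C : Set E).indicator 1) (β + b • (C : Set E).indicator 1) where
  boundary_left := by rw [map_add, map_smul, hC, smul_zero, add_zero, h.boundary_left]
  boundary_right := by rw [map_add, map_smul, hC, smul_zero, add_zero, h.boundary_right]
  cover x hx := by simpa [Set.indicator_of_notMem (mt mem_coe.1 hx)] using h.cover x hx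

-- Adding multiples of the even set `C` makes each of the four values on `C` the zero value.
lemma IsCoveringPair.isBalanced (h : IsCoveringPair D C φ β)
    (hC : boundary (ZMod 2) D ((C : Set E).indicator 1) = 0)
    (hmany : ∀ φ' β', IsCoveringPair D C φ' β' → #C ≤ 4 * #{x ∈ C | φ' x = 0 ∧ β' x = 0}) :
    IsBalanced C β := by
  have hquarter (a b : ZMod 2) : #C ≤ 4 * #{x ∈ C | φ x = a ∧ β x = b} := by
    refine (hmany _ _ (h.add_smul_indicator hC a b)).trans_eq ?_
    refine congrArg (4 * card ·) (filter_congr fun x hx => ?_)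
    simp [hx, CharTwo.add_eq_zero]
  have hsplit (b : ZMod 2) : #{x ∈ C | β x = b} =
      #{x ∈ C | φ x = 0 ∧ β x = b} + #{x ∈ C | φ x = 1 ∧ β x = b} := by
    rw [card_eq_card_filter_zmod_two_add _ φ, filter_comm, filter_comm (β · = b), filter_filter,
      filter_filter]
  have htotal := card_eq_card_filter_zmod_two_add C β
  have := hquarter 0 0
  have := hquarter 0 1
  have := hquarter 1 0
  have := hquarter 1 1
  have := hsplit 0
  have := hsplit 1
  rw [IsBalanced]
  omega

/-- The points at which the colouring `γ` of the segments `0, …, L` changes. -/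
def jumps (L : ℕ) (γ : ℕ → ZMod 2) : Finset ℕ := {i ∈ range L | Δ_[1] γ i = 1}

lemma IsEulerTour.boundary_indicator (hC : IsEulerTour D C L v e) (φ : E → ZMod 2) :
    boundary (ZMod 2) D ((C : Set E).indicator φ) =
      ∑ i ∈ jumps L (φ ∘ e), Finsupp.single (v (i + 1)) 1 := by
  classical
  have hsum : (C : Set E).indicator φ = ∑ i ∈ range L, φ (e i) • Pi.single (e i) 1 := by
    ext x
    simp only [← Pi.single_smul, smul_eq_mul, mul_one]
    by_cases hx : x ∈ C
    · obtain ⟨i, hi, rfl⟩ := hC.surj x hx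
      rw [Set.indicator_of_mem (mem_coe.2 hx), sum_single_apply_of_injOn hC.injOn _ subset_rfl hi,
        if_pos (mem_range.2 hi)]
    · rw [Set.indicator_of_notMem (mt mem_coe.1 hx), sum_single_apply_of_notMem]
      rintro i hi rfl
      exact hx (hC.mem i (mem_range.1 hi))
  have hedge (i : ℕ) (hi : i ∈ range L) : boundary (ZMod 2) D (Pi.single (e i) 1) =
      Finsupp.single (v i) 1 + Finsupp.single (v (i + 1)) 1 := by
    simpa using boundary_sum_single_one (D := D) (v := v) (e := e) i.le_succ fun j hj => by
      rw [Nat.Ico_succ_singleton, mem_singleton] at hj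
      exact hC.ends j (hj ▸ mem_range.1 hi)
  have hshift : ∑ i ∈ range L, φ (e i) • Finsupp.single (v i) (1 : ZMod 2) =
      ∑ i ∈ range L, φ (e (i + 1)) • Finsupp.single (v (i + 1)) 1 := by
    rw [eq_comm, ← sub_eq_zero, ← sum_sub_distrib,
      sum_range_sub fun i => φ (e i) • Finsupp.single (v i) (1 : ZMod 2), hC.closed,
      hC.closed_edge, sub_self]
  have hjump (i : ℕ) : φ (e (i + 1)) + φ (e i) = if Δ_[1] (φ ∘ e) i = 1 then 1 else 0 := by
    rw [fwdDiff, ZModModule.sub_eq_add]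
    rcases zmod_two_eq_zero_or_eq_one (φ (e (i + 1)) + φ (e i)) with h | h <;> simp [h]
  simp only [hsum, map_sum, map_smul]
  rw [sum_congr rfl fun i hi => by rw [hedge i hi, smul_add], sum_add_distrib, hshift,
    ← sum_add_distrib, jumps, sum_filter]
  refine sum_congr rfl fun i _ => ?_
  rw [← add_smul, hjump, ite_smul, one_smul, zero_smul]

lemma IsEulerTour.exists_arc (hC : IsEulerTour D C L v e) {i : ℕ} (hi : i < L) :
    ∃ z : E → ZMod 2,
      boundary (ZMod 2) D z = Finsupp.single (v (i + 1)) 1 + Finsupp.single (v L) 1 ∧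
      (∀ x ∉ C, z x = 0) ∧ ∀ j < L, z (e j) = if i < j then 1 else 0 := by
  classical
  refine ⟨∑ j ∈ Ico (i + 1) L, Pi.single (e j) 1,
    boundary_sum_single_one (Nat.succ_le_of_lt hi) fun j hj => hC.ends j (mem_Ico.1 hj).2,
    fun x hx => sum_single_apply_of_notMem fun j hj hjx => hx (hjx ▸ hC.mem j (mem_Ico.1 hj).2),
    fun j hj => ?_⟩
  rw [sum_single_apply_of_injOn hC.injOn _ (fun k hk => mem_range.2 (mem_Ico.1 hk).2) hj]
  exact if_congr (by rw [mem_Ico]; omega) rfl rfl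

/-- `z` assigns to each chord `i` of the pairing `m` of `T` a `ZMod 2`-flow meeting the tour `e`
of length `L` in the arc cut off by the chord, and vanishing at the zeros of `φ` off `C`. -/
structure IsChordFlow (D : E → V × V) (C : Finset E) (φ : E → ZMod 2) (L : ℕ) (e : ℕ → E)
    (T : Finset ℕ) (m : ℕ → ℕ) (z : ℕ → E → ZMod 2) : Prop where
  boundary_eq_zero : ∀ i ∈ T, boundary (ZMod 2) D (z i) = 0
  vanish : ∀ i ∈ T, ∀ x ∉ C, φ x = 0 → z i x = 0
  tour : ∀ i ∈ T, ∀ j ≤ L, z i (e j) = chordSide m i j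

lemma IsEulerTour.exists_isChordFlow (hC : IsEulerTour D C L v e)
    (hφ : boundary (ZMod 2) D φ = 0) :
    ∃ m z, IsPairing (jumps L (φ ∘ e)) m ∧ IsChordFlow D C φ L e (jumps L (φ ∘ e)) m z := by
  classical
  have hoff : boundary (ZMod 2) D ((C : Set E)ᶜ.indicator φ) =
      ∑ i ∈ jumps L (φ ∘ e), Finsupp.single (v (i + 1)) 1 := by
    rw [Set.indicator_compl, map_sub, hφ, zero_sub, ZModModule.neg_eq_self, hC.boundary_indicator]
  obtain ⟨m, hm, hlink⟩ := exists_isPairing_linked (Q := {x | x ∉ C ∧ φ x ≠ 0})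
    (fun x hx => by simpa [Set.indicator_apply] using hx) hoff
  choose! z hz hzb using hlink
  choose! arc harc harc_off harc_tour using fun i (hi : i < L) => hC.exists_arc hi
  have hlt {k : ℕ} (hk : k ∈ jumps L (φ ∘ e)) : k < L := mem_range.1 (mem_filter.1 hk).1
  have htour (i : ℕ) (hi : i ∈ jumps L (φ ∘ e)) (j : ℕ) (hj : j < L) :
      (z i + arc i + arc (m i)) (e j) = chordSide m i j := by
    simp only [Pi.add_apply]
    rw [hz i hi _ fun h => h.1 (hC.mem j hj), harc_tour i (hlt hi) j hj,
      harc_tour _ (hlt (hm.mem i hi)) j hj, zero_add, chordSide]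
  refine ⟨m, fun i => z i + arc i + arc (m i), hm, fun i hi => ?_, fun i hi x hxC hx => ?_,
    fun i hi j hj => ?_⟩
  · rw [map_add, map_add, hzb i hi, harc i (hlt hi), harc _ (hlt (hm.mem i hi)), add_assoc,
      add_add_add_comm _ (Finsupp.single (v L) 1), ZModModule.add_self (Finsupp.single (v L) 1),
      add_zero, ZModModule.add_self]
  · simp only [Pi.add_apply]
    rw [hz i hi x fun h => h.2 hx, harc_off i (hlt hi) x hxC, harc_off _ (hlt (hm.mem i hi)) x hxC,
      add_zero, add_zero]
  · rcases hj.lt_or_eq with hj | rfl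
    · exact htour i hi j hj
    · have := hlt hi
      have := hlt (hm.mem i hi)
      rw [hC.closed_edge, htour i hi 0 hC.pos]
      simp [chordSide, *, CharTwo.add_self_eq_zero]

lemma IsCoveringPair.add_sum (h : IsCoveringPair D C φ β) {T S : Finset ℕ} {m : ℕ → ℕ}
    {z : ℕ → E → ZMod 2} (hz : IsChordFlow D C φ L e T m z) (hS : S ⊆ T) :
    IsCoveringPair D C φ (β + ∑ i ∈ S, z i) where
  boundary_left := h.boundary_left
  boundary_right := by
    rw [map_add, h.boundary_right, map_sum,
      sum_eq_zero fun i hi => hz.boundary_eq_zero i (hS hi), add_zero]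
  cover x hx := by
    rcases zmod_two_eq_zero_or_eq_one (φ x) with h0 | h0
    · rw [Pi.add_apply, Finset.sum_apply, sum_eq_zero fun i hi => hz.vanish i (hS hi) x hx h0,
        add_zero]
      exact h.cover x hx
    · exact Or.inl h0

lemma IsCoveringPair.add_left (h : IsCoveringPair D C φ β) : IsCoveringPair D C (φ + β) β where
  boundary_left := by rw [map_add, h.boundary_left, h.boundary_right, add_zero]
  boundary_right := h.boundary_right
  cover x hx := by
    have := h.cover x hx
    rw [Pi.add_apply]
    generalize φ x = a, β x = b at this
    revert a b
    decide

end CoveringPair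

section Descent

variable {V E : Type*} [Fintype E] {D : E → V × V} {C : Finset E} {φ β : E → ZMod 2}
  {L : ℕ} {v : ℕ → V} {e : ℕ → E} {m : ℕ → ℕ} {z : ℕ → E → ZMod 2}

open fwdDiff

lemma IsChordFlow.isBichromatic {T : Finset ℕ} (hz : IsChordFlow D C φ L e T m z)
    (hbal : ∀ S ⊆ T, IsBalanced (range L) ((β + ∑ i ∈ S, z i) ∘ e)) :
    IsBichromatic L T m (β ∘ e) := by
  intro j hj
  have hbal' (S) (hS : S ⊆ T) : IsBalanced (range L) (β ∘ e + ∑ i ∈ S, z i ∘ e) := by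
    convert hbal S hS
    ext
    simp
  obtain ⟨j', hj', hside, hne⟩ := exists_ne_of_forall_subset_isBalanced hbal' (mem_range.2 hj)
  rw [mem_range] at hj'
  refine ⟨j', hj', fun i hi => ?_, hne⟩
  rw [← hz.tour i hi j hj.le, ← hz.tour i hi j' hj'.le]
  exact hside i hi

/-- The sum of `β` and the chord flows `z k` of all chords at both ends of which `β` changes along
the tour `e`; adding them removes exactly these changes. -/
def chordSwitch (β : E → ZMod 2) (e : ℕ → E) (T : Finset ℕ) (m : ℕ → ℕ) (z : ℕ → E → ZMod 2) :
    E → ZMod 2 :=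
  β + ∑ k ∈ monoPairs T m (Δ_[1] (β ∘ e)), z k

lemma IsChordFlow.fwdDiff_chordSwitch {T : Finset ℕ} (hz : IsChordFlow D C φ L e T m z) {i : ℕ}
    (hi : i < L) : Δ_[1] (chordSwitch β e T m z ∘ e) i =
      Δ_[1] (β ∘ e + ∑ k ∈ monoPairs T m (Δ_[1] (β ∘ e)), chordSide m k) i := by
  have htour (j : ℕ) (hj : j ≤ L) : chordSwitch β e T m z (e j) =
      (β ∘ e + ∑ k ∈ monoPairs T m (Δ_[1] (β ∘ e)), chordSide m k) j := by
    simp only [chordSwitch, Pi.add_apply, Finset.sum_apply, Function.comp_apply]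
    exact congrArg _ (sum_congr rfl fun k hk => hz.tour k (mem_filter.1 hk).1 j hj)
  rw [fwdDiff, fwdDiff, Function.comp_apply, Function.comp_apply, htour _ hi, htour _ hi.le]

lemma IsChordFlow.freeJumps_chordSwitch_subset {T : Finset ℕ} (hz : IsChordFlow D C φ L e T m z)
    (hm : IsPairing T m) (hT : jumps L (φ ∘ e) ⊆ T) :
    freeJumps (range L) (jumps L ((φ + chordSwitch β e T m z) ∘ e)) (chordSwitch β e T m z ∘ e) ⊆
      mixedEnds T m (Δ_[1] (β ∘ e)) := by
  intro i hi
  obtain ⟨hiL, hnot, hone⟩ := mem_filter.1 hi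
  have hφ : Δ_[1] (φ ∘ e) i = 1 := by
    rw [jumps, mem_filter, and_iff_right hiL] at hnot
    have hsum := zmod_two_eq_zero_of_ne_one hnot
    rw [Pi.add_comp, fwdDiff_add, Pi.add_apply, hone] at hsum
    exact CharTwo.add_eq_zero.1 hsum
  refine hm.mem_mixedEnds_of_fwdDiff_eq_one (hT (mem_filter.2 ⟨hiL, hφ⟩)) ?_
  rwa [← hz.fwdDiff_chordSwitch (mem_range.1 hiL)]

lemma IsCoveringPair.exists_card_freeJumps_lt (h : IsCoveringPair D C φ β)
    (hC : IsEulerTour D C L v e) (heven : boundary (ZMod 2) D ((C : Set E).indicator 1) = 0)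
    (hmany : ∀ φ' β', IsCoveringPair D C φ' β' → #C ≤ 4 * #{x ∈ C | φ' x = 0 ∧ β' x = 0}) :
    ∃ φ' β', IsCoveringPair D C φ' β' ∧ #(freeJumps (range L) (jumps L (φ' ∘ e)) (β' ∘ e)) <
      #(freeJumps (range L) (jumps L (φ ∘ e)) (β ∘ e)) := by
  obtain ⟨m, z, hm, hz⟩ := hC.exists_isChordFlow h.boundary_left
  have hbi : IsBichromatic L (jumps L (φ ∘ e)) m (β ∘ e) := hz.isBichromatic fun S hS =>
    hC.isBalanced_comp ((h.add_sum hz hS).isBalanced heven hmany)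
  have hcount := hbi.card_mixedEnds_add_two_le hC.pos (congrArg β hC.closed_edge)
    (filter_subset _ _) hm
  refine ⟨_, chordSwitch β e (jumps L (φ ∘ e)) m z, (h.add_sum hz (filter_subset _ _)).add_left, ?_⟩
  have hsub := card_le_card (hz.freeJumps_chordSwitch_subset (β := β) hm subset_rfl)
  exact hsub.trans_lt (by omega)

theorem IsCoveringPair.exists_four_mul_card_lt (h : IsCoveringPair D C φ β)
    (hC : IsEulerTour D C L v e) (heven : boundary (ZMod 2) D ((C : Set E).indicator 1) = 0) :
    ∃ φ' β', IsCoveringPair D C φ' β' ∧ 4 * #{x ∈ C | φ' x = 0 ∧ β' x = 0} < #C := by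
  by_contra! hmany
  obtain ⟨⟨φ₀, β₀⟩, h₀, hmin⟩ := exists_minimalFor_of_wellFoundedLT
    (fun w : (E → ZMod 2) × (E → ZMod 2) => IsCoveringPair D C w.1 w.2)
    (fun w => #(freeJumps (range L) (jumps L (w.1 ∘ e)) (w.2 ∘ e))) ⟨(φ, β), h⟩
  obtain ⟨φ', β', h', hlt⟩ := h₀.exists_card_freeJumps_lt hC heven hmany
  exact hlt.not_ge (hmin (j := (φ', β')) h' hlt.le)

end Descent

section IntFlow

variable {V E : Type*} [Fintype E] {D : E → V × V} {C : Finset E} {φ β : E → ZMod 2}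

lemma exists_isCoveringPair_of_intFlow {f : E → ℤ} (hf : boundary ℤ D f = 0)
    (hsupp : ∀ x ∉ C, ¬ 4 ∣ f x) : ∃ φ β, IsCoveringPair D C φ β := by
  obtain ⟨h, hh, hlift⟩ := exists_intFlow_lift (boundary_intCast_eq_zero (R := ZMod 2) hf)
  have heven (x : E) : Even (f x - h x) := by
    rw [← ZMod.intCast_eq_zero_iff_even, Int.cast_sub, (hlift x).2, sub_self]
  choose b hb using fun x => (heven x).two_dvd
  have hbflow : boundary ℤ D b = 0 := by
    have htwo : f - h = (2 : ℤ) • b := funext hb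
    have : (2 : ℤ) • boundary ℤ D b = 0 := by rw [← map_smul, ← htwo, map_sub, hf, hh, sub_zero]
    exact (smul_eq_zero_iff_right two_ne_zero).1 this
  refine ⟨_, _, boundary_intCast_eq_zero hf, boundary_intCast_eq_zero hbflow, fun x hx => ?_⟩
  by_contra! hcover
  have hfx := ZMod.intCast_eq_zero_iff_even.1 (zmod_two_eq_zero_of_ne_one hcover.1)
  have hbx := ZMod.intCast_eq_zero_iff_even.1 (zmod_two_eq_zero_of_ne_one hcover.2)
  have habs := abs_le.1 (hlift x).1
  have := hb x
  have := hsupp x hx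
  grind

lemma IsCoveringPair.exists_intFlow (h : IsCoveringPair D C φ β) :
    ∃ g : E → ℤ, boundary ℤ D g = 0 ∧ ∀ x, |g x| < 4 ∧ (g x = 0 → φ x = 0 ∧ β x = 0) := by
  obtain ⟨p, hp, hpφ⟩ := exists_intFlow_lift h.boundary_left
  obtain ⟨q, hq, hqβ⟩ := exists_intFlow_lift h.boundary_right
  refine ⟨p + (2 : ℤ) • q, by rw [map_add, map_smul, hp, hq, smul_zero, add_zero], fun x => ?_⟩
  obtain ⟨hpx, hφx⟩ := hpφ x
  obtain ⟨hqx, hβx⟩ := hqβ x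
  rw [abs_le] at hpx hqx
  rw [Pi.add_apply, Pi.smul_apply, smul_eq_mul]
  refine ⟨abs_lt.2 ⟨by omega, by omega⟩, fun hzero => ?_⟩
  have hpx0 : p x = 0 := by omega
  have hqx0 : q x = 0 := by omega
  rw [← hφx, ← hβx, hpx0, hqx0]
  exact ⟨Int.cast_zero, Int.cast_zero⟩

end IntFlow

lemma IsCircuit.isEvenSub {V E : Type} [DecidableEq V] {ends : E → Sym2 V} {CE : Finset E}
    (hC : IsCircuit ends CE) : IsEvenSub ends CE := fun v => by
  rcases hC.2.1 v with h | h <;> rw [h]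
  · exact Even.zero
  · exact even_two

theorem fan_conjecture_35_int_general {V E : Type} [Fintype E] [DecidableEq V]
    (ends : E → Sym2 V) (CE : Finset E) (hne : CE.Nonempty) (heven : IsEvenSub ends CE)
    (hconn : ∀ e₁ ∈ CE, ∀ e₂ ∈ CE, Relation.ReflTransGen
      (fun a b => ∃ v : V, v ∈ ends a ∧ v ∈ ends b ∧ a ∈ CE ∧ b ∈ CE) e₁ e₂)
    (D : E → V × V) (hD : ∀ e, s((D e).1, (D e).2) = ends e) (f : E → ℤ)
    (hcons : ∀ v, ∑ e with (D e).1 = v, f e = ∑ e with (D e).2 = v, f e)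
    (hsupp : ∀ e ∉ CE, ¬ 4 ∣ f e) :
    ∃ g : E → ℤ, (∀ e, |g e| < 4) ∧
      (∀ v, ∑ e with (D e).1 = v, g e = ∑ e with (D e).2 = v, g e) ∧
      (∀ e ∉ CE, g e ≠ 0) ∧ 4 * #{e ∈ CE | g e = 0} < #CE := by
  obtain rfl : (fun e => s((D e).1, (D e).2)) = ends := funext hD
  have hCE := boundary_indicator_eq_zero_iff_isEvenSub.2 heven
  obtain ⟨n, v, e, htour⟩ := exists_isEulerTour hne hCE hconn
  obtain ⟨φ₀, β₀, h₀⟩ := exists_isCoveringPair_of_intFlow (boundary_eq_zero_iff.2 hcons) hsupp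
  obtain ⟨φ, β, h, hfew⟩ := h₀.exists_four_mul_card_lt htour hCE
  obtain ⟨g, hg, hgφβ⟩ := h.exists_intFlow
  refine ⟨g, fun x => (hgφβ x).1, boundary_eq_zero_iff.1 hg, fun x hx hgx => ?_, ?_⟩
  · obtain ⟨hφ, hβ⟩ := (hgφβ x).2 hgx
    simpa [hφ, hβ] using h.cover x hx
  · have hzeros : #{x ∈ CE | g x = 0} ≤ #{x ∈ CE | φ x = 0 ∧ β x = 0} :=
      card_le_card (monotone_filter_right _ fun x _ => (hgφβ x).2)
    omega

/-- Theorem 1.4: if `|E(C)| ≤ 35` and `G` has a 4-flow `(D,f)`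
with `E(G) − E(C) ⊆ supp(f)`, then `G` has a 4-flow `(D,g)` with
`E(G) − E(C) ⊆ supp(g)` and `|E_{g=0}(C)| < |E(C)|/4`. -/
theorem fan_conjecture_35_int {V E : Type} [Fintype V] [Fintype E] [DecidableEq V]
    (ends : E → Sym2 V) (CE : Finset E) (hC : IsCircuit ends CE)
    (h35 : CE.card ≤ 35)
    (D : E → V × V) (hD : ∀ e, s((D e).1, (D e).2) = ends e)
    (f : E → ℤ) (hf4 : ∀ e, |f e| < 4)
    (hcons : ∀ v : V, ∑ e ∈ Finset.univ.filter (fun e => (D e).1 = v), f e =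
                      ∑ e ∈ Finset.univ.filter (fun e => (D e).2 = v), f e)
    (hsupp : ∀ e, e ∉ CE → f e ≠ 0) :
    ∃ g : E → ℤ, (∀ e, |g e| < 4) ∧
      (∀ v : V, ∑ e ∈ Finset.univ.filter (fun e => (D e).1 = v), g e =
                ∑ e ∈ Finset.univ.filter (fun e => (D e).2 = v), g e) ∧
      (∀ e, e ∉ CE → g e ≠ 0) ∧
      4 * (CE.filter (fun e => g e = 0)).card < CE.card := by
  exact fan_conjecture_35_int_general ends CE hC.1 hC.isEvenSub hC.2.2 D hD f hcons
    fun e he hdvd => hsupp e he (Int.eq_zero_of_abs_lt_dvd hdvd (hf4 e))
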